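/- arXiv:math/9201303 — 2 statements merged into one kernel-verified Lean document; each statement's English description precedes it below -/
import Mathlib

section
/- Fix a constant $\epsilon$ with $0 < \epsilon < 1$. For each $m \geq 1$ let $B_1, \ldots, B_m$ be independent Bernoulli random variables with $\Pr(B_k = 1) = 1/k$, and set $X = B_1 + \cdots + B_m$. Then there is a constant $K > 0$ such that for all $m \geq 2$, $\Pr\bigl(X < (1 - \epsilon) \ln m\bigr) \leq K\, m^{-\epsilon^2/2}$. -/
open MeasureTheory ProbabilityTheory

/-!
By convexity of the exponential, a `[0, 1]`-valued variable `X` of mean `p` satisfies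
`E e^(tX) ≤ 1 + (e^t - 1) p ≤ e^((e^t - 1) p)`, so an independent sum of mean `M` has moment
generating function at most `e^((e^t - 1) M)`. Markov's inequality at the optimal `t = log (1 - δ)`
bounds the probability of falling below `(1 - δ) M` by `e^(-(δ + (1 - δ) log (1 - δ)) M)`, hence by
`e^(-δ² M / 2)`. Here `M` is the `m`-th harmonic number, which is at least `log m`, so `K = 1`
works.
-/

lemma sq_sub_one_div_two_le_mul_log {x : ℝ} (hx₀ : 0 < x) (hx₁ : x ≤ 1) :
    (x ^ 2 - 1) / 2 ≤ x * Real.log x := by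
  have sinh_log_le : (x - x⁻¹) / 2 ≤ Real.log x :=
    Real.sinh_log hx₀ ▸ Real.sinh_le_self_iff.2 (Real.log_nonpos hx₀.le hx₁)
  calc (x ^ 2 - 1) / 2 = x * ((x - x⁻¹) / 2) := by field_simp
    _ ≤ x * Real.log x := by gcongr

lemma exp_mul_le_one_add_exp_sub_one_mul (t : ℝ) {x : ℝ} (hx : x ∈ Set.Icc (0 : ℝ) 1) :
    Real.exp (t * x) ≤ 1 + (Real.exp t - 1) * x := by
  have bernoulli := rpow_one_add_le_one_add_mul_self
    (by linarith [Real.exp_pos t] : -1 ≤ Real.exp t - 1) hx.1 hx.2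
  rwa [add_sub_cancel, ← Real.exp_mul, mul_comm x] at bernoulli

lemma log_le_sum_fin_one_div_add_one (n : ℕ) :
    Real.log n ≤ ∑ k : Fin n, 1 / ((k : ℝ) + 1) := by
  have log_le_harmonic := log_le_harmonic_floor n n.cast_nonneg
  rw [Nat.floor_natCast] at log_le_harmonic
  rw [Fin.sum_univ_eq_sum_range (fun k : ℕ => 1 / ((k : ℝ) + 1))]
  simpa [harmonic] using log_le_harmonic

section Chernoff

variable {Ω ι : Type*} {mΩ : MeasurableSpace Ω} {μ : Measure Ω}

lemma mgf_le_exp_of_mem_Icc_zero_one [IsProbabilityMeasure μ] {X : Ω → ℝ}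
    (hX : AEMeasurable X μ) (hX01 : ∀ᵐ ω ∂μ, X ω ∈ Set.Icc (0 : ℝ) 1) (t : ℝ) :
    mgf X μ t ≤ Real.exp ((Real.exp t - 1) * μ[X]) := by
  have X_integrable : Integrable X μ := Integrable.of_mem_Icc 0 1 hX hX01
  calc mgf X μ t ≤ ∫ ω, 1 + (Real.exp t - 1) * X ω ∂μ :=
        integral_mono_ae (integrable_exp_mul_of_mem_Icc hX hX01)
          ((integrable_const 1).add (X_integrable.const_mul _))
          (hX01.mono fun _ => exp_mul_le_one_add_exp_sub_one_mul t)
    _ = (Real.exp t - 1) * μ[X] + 1 := by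
        rw [integral_add (integrable_const 1) (X_integrable.const_mul _), integral_const_mul,
          integral_const, probReal_univ, one_smul, add_comm]
    _ ≤ Real.exp ((Real.exp t - 1) * μ[X]) := Real.add_one_le_exp _

lemma mgf_sum_le_exp_of_mem_Icc_zero_one {X : ι → Ω → ℝ} (hindep : iIndepFun X μ)
    (hX : ∀ i, AEMeasurable (X i) μ) {s : Finset ι}
    (hX01 : ∀ i ∈ s, ∀ᵐ ω ∂μ, X i ω ∈ Set.Icc (0 : ℝ) 1) (t : ℝ) :
    mgf (∑ i ∈ s, X i) μ t ≤ Real.exp ((Real.exp t - 1) * ∑ i ∈ s, μ[X i]) := by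
  have := hindep.isProbabilityMeasure
  rw [hindep.mgf_sum₀ hX, Finset.mul_sum, Real.exp_sum]
  exact Finset.prod_le_prod (fun _ _ => mgf_nonneg)
    fun i hi => mgf_le_exp_of_mem_Icc_zero_one (hX i) (hX01 i hi) t

lemma integrable_exp_mul_sum_of_mem_Icc_zero_one [IsFiniteMeasure μ] {X : ι → Ω → ℝ}
    {s : Finset ι} (hX : ∀ i ∈ s, AEMeasurable (X i) μ)
    (hX01 : ∀ i ∈ s, ∀ᵐ ω ∂μ, X i ω ∈ Set.Icc (0 : ℝ) 1) (t : ℝ) :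
    Integrable (fun ω => Real.exp (t * (∑ i ∈ s, X i) ω)) μ := by
  refine integrable_exp_mul_of_mem_Icc (a := 0) (b := s.card) (s.aemeasurable_sum hX) ?_
  filter_upwards [(Finset.eventually_all s).2 hX01] with ω hω
  rw [Finset.sum_apply]
  exact ⟨Finset.sum_nonneg fun i hi => (hω i hi).1,
    by simpa using Finset.sum_le_card_nsmul s (X · ω) 1 fun i hi => (hω i hi).2⟩

theorem measureReal_sum_le_one_sub_mul_le_exp {X : ι → Ω → ℝ} (hindep : iIndepFun X μ)
    (hX : ∀ i, AEMeasurable (X i) μ) {s : Finset ι}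
    (hX01 : ∀ i ∈ s, ∀ᵐ ω ∂μ, X i ω ∈ Set.Icc (0 : ℝ) 1)
    {δ : ℝ} (hδ₀ : 0 ≤ δ) (hδ₁ : δ < 1) :
    μ.real {ω | (∑ i ∈ s, X i) ω ≤ (1 - δ) * ∑ i ∈ s, μ[X i]} ≤
      Real.exp (-(δ ^ 2 / 2) * ∑ i ∈ s, μ[X i]) := by
  have := hindep.isProbabilityMeasure
  set M := ∑ i ∈ s, μ[X i]
  set t := Real.log (1 - δ)
  have one_sub_pos : 0 < 1 - δ := sub_pos.2 hδ₁
  have t_nonpos : t ≤ 0 := Real.log_nonpos one_sub_pos.le (by linarith)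
  have exp_t : Real.exp t = 1 - δ := Real.exp_log one_sub_pos
  have M_nonneg : 0 ≤ M := Finset.sum_nonneg fun i hi =>
    integral_nonneg_of_ae ((hX01 i hi).mono fun _ h => h.1)
  have exponent_le : -t * (1 - δ) + (Real.exp t - 1) ≤ -(δ ^ 2 / 2) := by
    rw [exp_t]
    linarith [sq_sub_one_div_two_le_mul_log one_sub_pos (by linarith)]
  calc μ.real {ω | (∑ i ∈ s, X i) ω ≤ (1 - δ) * M}
      ≤ Real.exp (-t * ((1 - δ) * M)) * mgf (∑ i ∈ s, X i) μ t :=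
        measure_le_le_exp_mul_mgf _ t_nonpos
          (integrable_exp_mul_sum_of_mem_Icc_zero_one (fun i _ => hX i) hX01 t)
    _ ≤ Real.exp (-t * ((1 - δ) * M)) * Real.exp ((Real.exp t - 1) * M) := by
        gcongr
        exact mgf_sum_le_exp_of_mem_Icc_zero_one hindep hX hX01 t
    _ = Real.exp ((-t * (1 - δ) + (Real.exp t - 1)) * M) := by
        rw [← Real.exp_add]
        ring_nf
    _ ≤ Real.exp (-(δ ^ 2 / 2) * M) := by gcongr

lemma integral_ite_one_zero_eq_measureReal {b : Ω → Bool} (hb : Measurable b) :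
    ∫ ω, (if b ω then 1 else 0 : ℝ) ∂μ = μ.real {ω | b ω = true} := by
  simpa [Set.indicator, Set.preimage] using
    integral_indicator_one (μ := μ) (hb (measurableSet_singleton true))

theorem measureReal_count_true_le_one_sub_mul_le_exp {B : ι → Ω → Bool} (hindep : iIndepFun B μ)
    (hB : ∀ i, Measurable (B i)) (s : Finset ι) {δ : ℝ} (hδ₀ : 0 ≤ δ) (hδ₁ : δ < 1) :
    μ.real {ω | ((∑ i ∈ s, if B i ω then 1 else 0 : ℕ) : ℝ) ≤
        (1 - δ) * ∑ i ∈ s, μ.real {ω | B i ω = true}} ≤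
      Real.exp (-(δ ^ 2 / 2) * ∑ i ∈ s, μ.real {ω | B i ω = true}) := by
  have toReal_measurable : Measurable fun b : Bool => if b then (1 : ℝ) else 0 :=
    measurable_of_countable _
  have chernoff := measureReal_sum_le_one_sub_mul_le_exp
    (hindep.comp (fun _ b => if b then (1 : ℝ) else 0) fun _ => toReal_measurable)
    (fun i => (toReal_measurable.comp (hB i)).aemeasurable) (s := s)
    (fun i _ => ae_of_all μ fun ω => by cases h : B i ω <;> simp [h]) hδ₀ hδ₁
  simpa [integral_ite_one_zero_eq_measureReal (hB _)] using chernoff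

end Chernoff

/-- **Lemma 10, first estimate.** Fix `0 < ε < 1`.  For each `m` let
`B 1, …, B m` be independent Bernoulli random variables with `Pr(B k = 1) = 1/k`
and let `X = B 1 + ⋯ + B m`.  Then there is a constant `K > 0` such that for all
`m ≥ 2`, `Pr(X < (1 - ε) ln m) ≤ K m^(-ε²/2)`. -/
theorem lemma10_first_estimate
    (ε : ℝ) (hε0 : 0 < ε) (hε1 : ε < 1)
    (Ω : ℕ → Type*) [∀ m, MeasurableSpace (Ω m)]
    (μ : ∀ m, Measure (Ω m)) [∀ m, IsProbabilityMeasure (μ m)]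
    (B : ∀ m, Fin m → Ω m → Bool)
    (hmeas : ∀ m k, Measurable (B m k))
    (hindep : ∀ m, iIndepFun (B m) (μ m))
    (hbern : ∀ m, ∀ k : Fin m, ((μ m) {ω | B m k ω = true}).toReal = 1 / ((k : ℕ) + 1)) :
    ∃ K : ℝ, 0 < K ∧ ∀ m : ℕ, 2 ≤ m →
      ((μ m) {ω | ((∑ k : Fin m, if B m k ω then 1 else 0 : ℕ) : ℝ) <
          (1 - ε) * Real.log m}).toReal ≤ K * (m : ℝ) ^ (-(ε ^ 2 / 2)) := by
  refine ⟨1, one_pos, fun m hm => ?_⟩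
  set H := ∑ k : Fin m, 1 / ((k : ℝ) + 1)
  have log_le_H : Real.log m ≤ H := log_le_sum_fin_one_div_add_one m
  have mean_eq : ∑ k : Fin m, (μ m).real {ω | B m k ω = true} = H :=
    Finset.sum_congr rfl fun k _ => hbern m k
  have chernoff := measureReal_count_true_le_one_sub_mul_le_exp (hindep m) (hmeas m)
    Finset.univ hε0.le hε1
  rw [mean_eq] at chernoff
  calc (μ m).real {ω | ((∑ k : Fin m, if B m k ω then 1 else 0 : ℕ) : ℝ) < (1 - ε) * Real.log m}
      ≤ (μ m).real {ω | ((∑ k : Fin m, if B m k ω then 1 else 0 : ℕ) : ℝ) ≤ (1 - ε) * H} :=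
        measureReal_mono fun ω hω => hω.le.trans
          (mul_le_mul_of_nonneg_left log_le_H (sub_nonneg.2 hε1.le))
    _ ≤ Real.exp (-(ε ^ 2 / 2) * H) := chernoff
    _ ≤ Real.exp (-(ε ^ 2 / 2) * Real.log m) :=
        Real.exp_le_exp.2 (mul_le_mul_of_nonpos_left log_le_H (by linarith [sq_nonneg ε]))
    _ = 1 * (m : ℝ) ^ (-(ε ^ 2 / 2)) := by
        rw [one_mul, Real.rpow_def_of_pos (by positivity), mul_comm]
end

section
/- Fix a constant $\epsilon$ with $0 < \epsilon < 1$. For each $m \geq 1$ let $B_1, \ldots, B_m$ be independent Bernoulli random variables with $\Pr(B_k = 1) = 1/k$, and set $X = B_1 + \cdots + B_m$. Then there is a constant $K > 0$ such that for all $m \geq 2$, $\Pr\bigl(X > (1 + \epsilon) \ln m\bigr) \leq K\, m^{-\epsilon^2/2 + \epsilon^3/6}$. -/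
open MeasureTheory ProbabilityTheory

/-!
Chernoff's method at `t = log (1 + ε)`. Convexity of `exp` gives `E exp (t X) ≤ exp (ε E X)` for
`X` with values in `[0, 1]`, so for an independent sum whose mean is at most `c + L` the probability
of reaching `(1 + ε) L` is at most `exp (ε c - L klFun (1 + ε))`, where
`klFun (1 + ε) = (1 + ε) log (1 + ε) - ε`. With means at most `1 / (k + 1)` the harmonic bound
`H_m ≤ 1 + log m` allows `c = 1` and `L = log m`, and `ε² / 2 - ε³ / 6` is the cubic Taylor
polynomial of `klFun (1 + ε)`, which bounds it from below.
-/

section Chernoff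

open Real Set InformationTheory

lemma sub_sq_div_two_le_log_one_add {x : ℝ} (hx : 0 ≤ x) : x - x ^ 2 / 2 ≤ log (1 + x) := by
  refine le_trans ?_ (le_log_one_add_of_nonneg hx)
  rw [le_div_iff₀ (by positivity)]
  linarith [pow_nonneg hx 3]

lemma sq_div_two_sub_cube_div_six_le_klFun_one_add {x : ℝ} (hx : 0 ≤ x) :
    x ^ 2 / 2 - x ^ 3 / 6 ≤ klFun (1 + x) := by
  let f : ℝ → ℝ := fun y ↦ klFun (1 + y) - (y ^ 2 / 2 - y ^ 3 / 6)
  have hderiv {y : ℝ} (hy : 0 ≤ y) : HasDerivAt f (log (1 + y) - (y - y ^ 2 / 2)) y := by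
    have hkl := (hasDerivAt_klFun (by positivity : 1 + y ≠ 0)).comp_const_add 1 y
    have hpoly := ((hasDerivAt_pow 2 y).div_const 2).sub ((hasDerivAt_pow 3 y).div_const 6)
    exact (hkl.sub hpoly).congr_deriv (by norm_num; ring)
  have hmono : MonotoneOn f (Ici 0) := by
    refine monotoneOn_of_hasDerivWithinAt_nonneg (convex_Ici 0)
      (fun y hy ↦ (hderiv hy).continuousAt.continuousWithinAt)
      (fun y hy ↦ (hderiv (interior_subset hy)).hasDerivWithinAt) fun y hy ↦ ?_
    exact sub_nonneg.2 (sub_sq_div_two_le_log_one_add (interior_subset hy))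
  have hf : f 0 ≤ f x := hmono self_mem_Ici hx hx
  simp only [f, add_zero, klFun_one] at hf
  linarith

lemma exp_mul_le_one_add_mul {x : ℝ} (t : ℝ) (hx : x ∈ Icc 0 1) :
    exp (t * x) ≤ 1 + x * (exp t - 1) := by
  have h := convexOn_exp.2 (mem_univ 0) (mem_univ t) (sub_nonneg.2 hx.2) hx.1 (sub_add_cancel 1 x)
  simp only [smul_eq_mul, mul_zero, zero_add, exp_zero, mul_one] at h
  rw [mul_comm t]
  linarith

variable {Ω : Type*} [MeasurableSpace Ω] {μ : Measure Ω}

lemma integral_ite_bool {b : Ω → Bool} (hb : Measurable b) :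
    ∫ ω, (if b ω then (1 : ℝ) else 0) ∂μ = μ.real {ω | b ω = true} := by
  rw [← integral_indicator_one (measurableSet_eq_fun hb measurable_const)]
  simp [indicator_apply]

lemma mgf_le_exp_integral_mul_of_mem_Icc [IsProbabilityMeasure μ] {X : Ω → ℝ} (t : ℝ)
    (hX : AEMeasurable X μ) (hX01 : ∀ᵐ ω ∂μ, X ω ∈ Icc 0 1) :
    mgf X μ t ≤ exp (μ[X] * (exp t - 1)) := by
  have hint : Integrable X μ := .of_mem_Icc 0 1 hX hX01
  calc mgf X μ t
      ≤ ∫ ω, (1 + X ω * (exp t - 1)) ∂μ := by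
        refine integral_mono_ae (integrable_exp_mul_of_mem_Icc hX hX01)
          ((integrable_const 1).add (hint.mul_const _)) ?_
        filter_upwards [hX01] with ω hω using exp_mul_le_one_add_mul t hω
    _ = μ[X] * (exp t - 1) + 1 := by
        rw [integral_add (integrable_const 1) (hint.mul_const _), integral_mul_const]
        simp [add_comm]
    _ ≤ exp (μ[X] * (exp t - 1)) := add_one_le_exp _

variable {ι : Type*} {X : ι → Ω → ℝ}

lemma mgf_sum_le_exp_sum_integral_mul (s : Finset ι) (t : ℝ) (hX : ∀ i, AEMeasurable (X i) μ)
    (hX01 : ∀ i ∈ s, ∀ᵐ ω ∂μ, X i ω ∈ Icc 0 1) (hindep : iIndepFun X μ) :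
    mgf (∑ i ∈ s, X i) μ t ≤ exp ((∑ i ∈ s, μ[X i]) * (exp t - 1)) := by
  have := hindep.isProbabilityMeasure
  rw [hindep.mgf_sum₀ hX, Finset.sum_mul, exp_sum]
  exact Finset.prod_le_prod (fun _ _ ↦ mgf_nonneg)
    fun i hi ↦ mgf_le_exp_integral_mul_of_mem_Icc t (hX i) (hX01 i hi)

lemma integrable_exp_mul_sum_of_mem_Icc [IsFiniteMeasure μ] (s : Finset ι) (t : ℝ)
    (hX : ∀ i ∈ s, AEMeasurable (X i) μ) (hX01 : ∀ i ∈ s, ∀ᵐ ω ∂μ, X i ω ∈ Icc 0 1) :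
    Integrable (fun ω ↦ exp (t * (∑ i ∈ s, X i) ω)) μ := by
  refine integrable_exp_mul_of_mem_Icc (a := 0) (b := s.card) (s.aemeasurable_sum hX) ?_
  filter_upwards [(Filter.eventually_all_finset s).2 hX01] with ω hω
  rw [Finset.sum_apply]
  exact ⟨Finset.sum_nonneg fun i hi ↦ (hω i hi).1,
    (Finset.sum_le_card_nsmul s _ 1 fun i hi ↦ (hω i hi).2).trans_eq (by simp)⟩

lemma measureReal_one_add_mul_le_sum_le_exp_klFun {ε c L : ℝ} (hε : 0 ≤ ε) (s : Finset ι)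
    (hX : ∀ i, AEMeasurable (X i) μ) (hX01 : ∀ i ∈ s, ∀ᵐ ω ∂μ, X i ω ∈ Icc 0 1)
    (hindep : iIndepFun X μ) (hmean : ∑ i ∈ s, μ[X i] ≤ c + L) :
    μ.real {ω | (1 + ε) * L ≤ ∑ i ∈ s, X i ω} ≤ exp (ε * c - L * klFun (1 + ε)) := by
  have := hindep.isProbabilityMeasure
  have hexp : exp (log (1 + ε)) - 1 = ε := by
    rw [exp_log (by positivity), add_sub_cancel_left]
  have hmgf : mgf (∑ i ∈ s, X i) μ (log (1 + ε)) ≤ exp ((c + L) * ε) := by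
    refine (mgf_sum_le_exp_sum_integral_mul s _ hX hX01 hindep).trans ?_
    rw [hexp]
    gcongr
  calc μ.real {ω | (1 + ε) * L ≤ ∑ i ∈ s, X i ω}
      = μ.real {ω | (1 + ε) * L ≤ (∑ i ∈ s, X i) ω} := by simp only [Finset.sum_apply]
    _ ≤ exp (-log (1 + ε) * ((1 + ε) * L)) * mgf (∑ i ∈ s, X i) μ (log (1 + ε)) :=
        measure_ge_le_exp_mul_mgf _ (log_nonneg (le_add_of_nonneg_right hε))
          (integrable_exp_mul_sum_of_mem_Icc s _ (fun i _ ↦ hX i) hX01)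
    _ ≤ exp (-log (1 + ε) * ((1 + ε) * L)) * exp ((c + L) * ε) := by gcongr
    _ = exp (ε * c - L * klFun (1 + ε)) := by
        rw [← exp_add, klFun_apply]
        ring_nf

lemma sum_one_div_add_one_le_one_add_log (m : ℕ) :
    ∑ k : Fin m, 1 / (((k : ℕ) : ℝ) + 1) ≤ 1 + log m := by
  simpa [harmonic, Fin.sum_univ_eq_sum_range fun k : ℕ ↦ ((k : ℝ) + 1)⁻¹]
    using harmonic_le_one_add_log m

theorem lemma10_second_estimate_general {ε : ℝ} (hε : 0 ≤ ε) {m : ℕ} (hm : m ≠ 0)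
    {X : Fin m → Ω → ℝ} (hX : ∀ k, AEMeasurable (X k) μ)
    (hX01 : ∀ k, ∀ᵐ ω ∂μ, X k ω ∈ Icc 0 1) (hindep : iIndepFun X μ)
    (hmean : ∀ k : Fin m, μ[X k] ≤ 1 / (((k : ℕ) : ℝ) + 1)) :
    μ.real {ω | (1 + ε) * log m ≤ ∑ k, X k ω} ≤
      exp ε * (m : ℝ) ^ (-(ε ^ 2 / 2) + ε ^ 3 / 6) := by
  have hsum : ∑ k, μ[X k] ≤ 1 + log m :=
    (Finset.sum_le_sum fun k _ ↦ hmean k).trans (sum_one_div_add_one_le_one_add_log m)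
  have hrate := mul_le_mul_of_nonneg_left (sq_div_two_sub_cube_div_six_le_klFun_one_add hε)
    (log_natCast_nonneg m)
  calc μ.real {ω | (1 + ε) * log m ≤ ∑ k, X k ω}
      ≤ exp (ε * 1 - log m * klFun (1 + ε)) :=
        measureReal_one_add_mul_le_sum_le_exp_klFun hε _ hX (fun k _ ↦ hX01 k) hindep hsum
    _ ≤ exp (ε + log m * (-(ε ^ 2 / 2) + ε ^ 3 / 6)) := exp_le_exp.2 (by linarith)
    _ = exp ε * (m : ℝ) ^ (-(ε ^ 2 / 2) + ε ^ 3 / 6) := by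
        rw [exp_add, rpow_def_of_pos (by positivity)]

end Chernoff

/-- **Lemma 10, second estimate.** Fix `0 < ε < 1`.  For each `m` let
`B 1, …, B m` be independent Bernoulli random variables with `Pr(B k = 1) = 1/k`
and let `X = B 1 + ⋯ + B m`.  Then there is a constant `K > 0` such that for all
`m ≥ 2`, `Pr(X > (1 + ε) ln m) ≤ K m^(-ε²/2 + ε³/6)`. -/
theorem lemma10_second_estimate
    (ε : ℝ) (hε0 : 0 < ε) (hε1 : ε < 1)
    (Ω : ℕ → Type*) [∀ m, MeasurableSpace (Ω m)]
    (μ : ∀ m, Measure (Ω m)) [∀ m, IsProbabilityMeasure (μ m)]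
    (B : ∀ m, Fin m → Ω m → Bool)
    (hmeas : ∀ m k, Measurable (B m k))
    (hindep : ∀ m, iIndepFun (B m) (μ m))
    (hbern : ∀ m, ∀ k : Fin m, ((μ m) {ω | B m k ω = true}).toReal = 1 / ((k : ℕ) + 1)) :
    ∃ K : ℝ, 0 < K ∧ ∀ m : ℕ, 2 ≤ m →
      ((μ m) {ω | (1 + ε) * Real.log m <
          ((∑ k : Fin m, if B m k ω then 1 else 0 : ℕ) : ℝ)}).toReal ≤
        K * (m : ℝ) ^ (-(ε ^ 2 / 2) + ε ^ 3 / 6) := by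
  refine ⟨Real.exp ε, Real.exp_pos ε, fun m hm ↦ ?_⟩
  let toReal : Bool → ℝ := fun b ↦ if b then 1 else 0
  have htoReal : Measurable toReal := .of_discrete
  refine le_trans (measureReal_mono fun ω hω ↦ ?_) <|
    lemma10_second_estimate_general hε0.le (by lia) (X := fun k ↦ toReal ∘ B m k)
      (fun k ↦ (htoReal.comp (hmeas m k)).aemeasurable)
      (fun k ↦ .of_forall fun ω ↦ by cases h : B m k ω <;> simp [toReal, h])
      ((hindep m).comp _ fun _ ↦ htoReal)
      (fun k ↦ ((integral_ite_bool (hmeas m k)).trans (hbern m k)).le)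
  simp only [Set.mem_ofPred_eq, Nat.cast_sum, Nat.cast_ite, Nat.cast_one, Nat.cast_zero] at hω
  exact hω.le
end
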